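/- Let a > 0 and b ≥ 0 be real numbers. The supremum over y ∈ (0, 1) of a * Real.log y + b * Real.log (1 - y) equals a * Real.log (a / (a + b)) + b * Real.log (b / (a + b)), where the convention 0 * Real.log 0 = 0 is used for the term b * Real.log (b / (a + b)) when b = 0 (in which case the supremum is 0, approached as y → 1). -/

import Mathlib

/-- Tangent-line bound for the logarithm at `c / s`, scaled by `c`. -/
theorem mul_log_le_mul_log_div_add {c s y : ℝ} (hc : 0 < c) (hs : 0 < s) (hy : 0 < y) :
    c * Real.log y ≤ c * Real.log (c / s) + (y * s - c) := by
  have hlog : Real.log (y / (c / s)) = Real.log y - Real.log (c / s) :=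
    Real.log_div hy.ne' (div_pos hc hs).ne'
  have hle : c * Real.log (y / (c / s)) ≤ c * (y / (c / s) - 1) :=
    mul_le_mul_of_nonneg_left (Real.log_le_sub_one_of_pos (by positivity)) hc.le
  have heq : c * (y / (c / s) - 1) = y * s - c := by field_simp
  rw [hlog, heq] at hle
  linarith

/-- The image of `(0, 1)` under `y ↦ a * log y` has least upper bound `0`. -/
theorem isLUB_mul_log_Ioo {a : ℝ} (ha : 0 < a) :
    IsLUB ((fun y => a * Real.log y) '' Set.Ioo (0 : ℝ) 1) 0 := by
  refine ⟨?_, fun u hu => ?_⟩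
  · rintro _ ⟨y, hy, rfl⟩
    exact mul_nonpos_of_nonneg_of_nonpos ha.le (Real.log_nonpos hy.1.le hy.2.le)
  · by_contra! hneg
    have hmem : Real.exp (u / (2 * a)) ∈ Set.Ioo (0 : ℝ) 1 :=
      ⟨Real.exp_pos _, Real.exp_lt_one_iff.2 (div_neg_of_neg_of_pos hneg (by positivity))⟩
    have hle : a * Real.log (Real.exp (u / (2 * a))) ≤ u := hu ⟨_, hmem, rfl⟩
    have heq : a * (u / (2 * a)) = u / 2 := by field_simp
    rw [Real.log_exp, heq] at hle
    linarith

theorem isLUB_mul_log_add_mul_log_one_sub {a b : ℝ} (ha : 0 < a) (hb : 0 ≤ b) :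
    IsLUB ((fun y => a * Real.log y + b * Real.log (1 - y)) '' Set.Ioo (0 : ℝ) 1)
      (a * Real.log (a / (a + b)) + b * Real.log (b / (a + b))) := by
  rcases hb.eq_or_lt with rfl | hb
  · simpa [ha.ne'] using isLUB_mul_log_Ioo ha
  · have hs : 0 < a + b := by positivity
    have hsub : 1 - a / (a + b) = b / (a + b) := by field_simp; ring
    refine IsGreatest.isLUB ⟨⟨a / (a + b), ⟨by positivity, ?_⟩, ?_⟩, ?_⟩
    · rw [div_lt_one hs]
      linarith
    · simp only [hsub]
    · rintro _ ⟨y, hy, rfl⟩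
      have h₁ := mul_log_le_mul_log_div_add ha hs hy.1
      have h₂ := mul_log_le_mul_log_div_add hb hs (sub_pos.2 hy.2)
      dsimp only
      linarith

theorem stmt_14 (a b : ℝ) (ha : 0 < a) (hb : 0 ≤ b) :
    sSup ((fun y => a * Real.log y + b * Real.log (1 - y)) '' Set.Ioo (0 : ℝ) 1) =
      a * Real.log (a / (a + b)) + b * Real.log (b / (a + b)) :=
  (isLUB_mul_log_add_mul_log_one_sub ha hb).csSup_eq
    ((Set.nonempty_Ioo.2 one_pos).image _)
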